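/- Fix u, v ∈ ℝ and r ∈ (-1,1), and set the quadrant probabilities p₁₁ = Φ₂(u,v;r), p₁₀ = Φ₂(u,-v;-r), p₀₁ = Φ₂(-u,v;-r), p₀₀ = Φ₂(-u,-v;r). For i, j ∈ {0,1}, let ℓ_{ij}(s) = i·j·log Φ₂(u,v;s) + i·(1-j)·log Φ₂(u,-v;-s) + (1-i)·j·log Φ₂(-u,v;-s) + (1-i)·(1-j)·log Φ₂(-u,-v;s). Then each ℓ_{ij} is twice differentiable at s = r, and the expected Hessian at the truth satisfies p₁₁·ℓ₁₁''(r) + p₁₀·ℓ₁₀''(r) + p₀₁·ℓ₀₁''(r) + p₀₀·ℓ₀₀''(r) = -( 1/p₁₁ + 1/p₁₀ + 1/p₀₁ + 1/p₀₀ ) · φ₂(u,v;r)². (This is the information-matrix identity for the local dependence parameter underlying the paper's formula for E[∂_{δδ} ℓ^{yw}].) -/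

import Mathlib

/-!
The analytic core is Plackett's identity `∂Φ₂(u,v;ρ)/∂ρ = φ₂(u,v;ρ)` (`hasDerivAt_Phi2`).
Integrating out the second coordinate gives `Φ₂(u,v;ρ) = ∫_{s ≤ u} φ(s) Φ((v - ρs)/√(1-ρ²)) ds`
(`Phi2_eq`). The `ρ`-derivative of this one-dimensional integrand equals the `s`-derivative of
`φ₂(s,v;ρ)`: both are `φ₂(s,v;ρ) (ρv - s)/(1-ρ²)`. Differentiating under the integral sign,
with dominating function a multiple of `φ(s)(|v| + |s|)`, and then integrating over `s ≤ u` leaves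
the boundary term `φ₂(u,v;ρ)`.

Since `φ₂(u,-v;-ρ) = φ₂(-u,v;-ρ) = φ₂(-u,-v;ρ) = φ₂(u,v;ρ)`, the four quadrant probabilities have
`ρ`-derivatives `±φ₂(u,v;ρ)` with signs `+,-,-,+`. For a positive `p` with `p' = ±φ₂`,
`p (log p)'' = ±φ₂' - φ₂²/p`; summing over the quadrants cancels the terms containing the derivative of `φ₂`.
-/

open Real MeasureTheory

/-- Standard normal density. -/
noncomputable def phi (t : ℝ) : ℝ := (Real.sqrt (2 * Real.pi))⁻¹ * Real.exp (-(t ^ 2) / 2)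

/-- Standard normal CDF. -/
noncomputable def Phi (u : ℝ) : ℝ := ∫ t in Set.Iic u, phi t

/-- Standard bivariate normal density with correlation ρ. -/
noncomputable def phi2 (s t ρ : ℝ) : ℝ :=
  (2 * Real.pi * Real.sqrt (1 - ρ ^ 2))⁻¹ *
    Real.exp (-(s ^ 2 - 2 * ρ * s * t + t ^ 2) / (2 * (1 - ρ ^ 2)))

/-- Standard bivariate normal CDF with correlation ρ. -/
noncomputable def Phi2 (u v ρ : ℝ) : ℝ :=
  ∫ s in Set.Iic u, ∫ t in Set.Iic v, phi2 s t ρ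

/-- Quadrant log-likelihood in the correlation parameter, with outcome indicators i, j. -/
noncomputable def quadLL (u v i j : ℝ) (s : ℝ) : ℝ :=
  i * j * Real.log (Phi2 u v s) + i * (1 - j) * Real.log (Phi2 u (-v) (-s))
    + (1 - i) * j * Real.log (Phi2 (-u) v (-s))
    + (1 - i) * (1 - j) * Real.log (Phi2 (-u) (-v) s)

/-! ### The univariate normal density and distribution function -/

lemma phi_pos (t : ℝ) : 0 < phi t := by
  unfold phi; positivity

lemma phi_le_one (t : ℝ) : phi t ≤ 1 := by
  unfold phi
  have h1 : 1 ≤ Real.sqrt (2 * Real.pi) := by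
    rw [Real.one_le_sqrt]; nlinarith [Real.pi_gt_three]
  have h2 : Real.exp (-(t ^ 2) / 2) ≤ 1 := by
    rw [Real.exp_le_one_iff]; nlinarith [sq_nonneg t]
  exact mul_le_one₀ (inv_le_one_of_one_le₀ h1) (Real.exp_pos _).le h2

lemma continuous_phi : Continuous phi := by
  unfold phi; fun_prop

lemma phi_eq (t : ℝ) :
    phi t = (Real.sqrt (2 * Real.pi))⁻¹ * Real.exp (-(1 / 2) * t ^ 2) := by
  unfold phi; congr 2; ring

lemma integrable_phi : Integrable phi := by
  rw [funext phi_eq]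
  exact (integrable_exp_neg_mul_sq (by norm_num)).const_mul _

lemma integrable_phi_mul_abs : Integrable (fun s => phi s * |s|) := by
  have h := ((integrable_mul_exp_neg_mul_sq (b := 1 / 2) (by norm_num)).norm).const_mul
    (Real.sqrt (2 * Real.pi))⁻¹
  refine h.congr (Filter.Eventually.of_forall fun s => ?_)
  simp only [phi_eq, norm_mul, Real.norm_eq_abs, Real.abs_exp]
  ring

lemma Phi_pos (x : ℝ) : 0 < Phi x := by
  unfold Phi
  rw [setIntegral_pos_iff_support_of_nonneg_ae
    (Filter.Eventually.of_forall fun t => (phi_pos t).le) integrable_phi.integrableOn]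
  rw [Set.eq_univ_of_forall (s := Function.support phi) fun t => (phi_pos t).ne']
  simp

lemma Phi_le (x : ℝ) : Phi x ≤ ∫ t, phi t :=
  setIntegral_le_integral integrable_phi (Filter.Eventually.of_forall fun t => (phi_pos t).le)

lemma hasDerivAt_Phi (x : ℝ) : HasDerivAt Phi (phi x) x := by
  have h : Phi = fun x => Phi 0 + ∫ t in (0 : ℝ)..x, phi t := by
    funext y
    rw [← intervalIntegral.integral_Iic_sub_Iic integrable_phi.integrableOn
      integrable_phi.integrableOn]
    simp [Phi]
  rw [h]
  exact (intervalIntegral.integral_hasDerivAt_right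
    (continuous_phi.intervalIntegrable _ _)
    (continuous_phi.stronglyMeasurableAtFilter _ _) continuous_phi.continuousAt).const_add _

lemma continuous_Phi : Continuous Phi :=
  continuous_iff_continuousAt.mpr fun x => (hasDerivAt_Phi x).continuousAt

/-! ### Reduction of the bivariate distribution function to a single integral -/

/-- Factorization of the bivariate density into marginal times conditional density. -/
lemma phi2_eq {ρ : ℝ} (h : 0 < 1 - ρ ^ 2) (s t : ℝ) :
    phi2 s t ρ =
      phi s * ((Real.sqrt (1 - ρ ^ 2))⁻¹ * phi ((t - ρ * s) / Real.sqrt (1 - ρ ^ 2))) := by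
  unfold phi2 phi
  have hσ : Real.sqrt (1 - ρ ^ 2) ^ 2 = 1 - ρ ^ 2 := Real.sq_sqrt h.le
  have hp : (Real.sqrt (2 * Real.pi))⁻¹ * (Real.sqrt (2 * Real.pi))⁻¹ = (2 * Real.pi)⁻¹ := by
    rw [← mul_inv, Real.mul_self_sqrt (by positivity)]
  have he : -(s ^ 2 - 2 * ρ * s * t + t ^ 2) / (2 * (1 - ρ ^ 2))
      = -(s ^ 2) / 2 + -(((t - ρ * s) / Real.sqrt (1 - ρ ^ 2)) ^ 2) / 2 := by
    rw [div_pow, hσ]; field_simp; ring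
  rw [he, Real.exp_add, mul_inv, ← hp]
  ring

lemma integral_phi2_inner {ρ : ℝ} (h : 0 < 1 - ρ ^ 2) (s v : ℝ) :
    ∫ t in Set.Iic v, phi2 s t ρ
      = phi s * Phi ((v - ρ * s) / Real.sqrt (1 - ρ ^ 2)) := by
  have hσ : 0 < Real.sqrt (1 - ρ ^ 2) := Real.sqrt_pos.mpr h
  set σ := Real.sqrt (1 - ρ ^ 2) with hσd
  simp_rw [phi2_eq h, ← hσd]
  rw [integral_const_mul, integral_const_mul]
  congr 1
  unfold Phi
  rw [← integral_indicator measurableSet_Iic, ← integral_indicator measurableSet_Iic]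
  have h1 := integral_sub_right_eq_self (μ := volume)
    (fun x => (Set.Iic ((v - ρ * s) / σ)).indicator phi (x / σ)) (ρ * s)
  rw [Measure.integral_comp_div, abs_of_pos hσ, smul_eq_mul] at h1
  rw [inv_mul_eq_iff_eq_mul₀ hσ.ne', ← h1]
  congr 1
  funext x
  simp [Set.indicator_apply, div_le_div_iff_of_pos_right hσ]

/-- The bivariate distribution function as a single integral of marginal density times
conditional distribution function. -/
lemma Phi2_eq {ρ : ℝ} (h : 0 < 1 - ρ ^ 2) (u v : ℝ) :
    Phi2 u v ρ = ∫ s in Set.Iic u, phi s * Phi ((v - ρ * s) / Real.sqrt (1 - ρ ^ 2)) := by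
  unfold Phi2
  simp_rw [integral_phi2_inner h]

lemma integrable_phi_mul_Phi (ρ v : ℝ) :
    Integrable (fun s => phi s * Phi ((v - ρ * s) / Real.sqrt (1 - ρ ^ 2))) := by
  refine (integrable_phi.mul_const (∫ t, phi t)).mono' ?_ (Filter.Eventually.of_forall fun s => ?_)
  · have := continuous_phi
    have := continuous_Phi
    exact Continuous.aestronglyMeasurable (by fun_prop)
  · rw [Real.norm_eq_abs, abs_of_pos (mul_pos (phi_pos _) (Phi_pos _))]
    exact mul_le_mul_of_nonneg_left (Phi_le _) (phi_pos _).le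

lemma Phi2_pos {ρ : ℝ} (h : 0 < 1 - ρ ^ 2) (u v : ℝ) : 0 < Phi2 u v ρ := by
  have hp : ∀ s, 0 < phi s * Phi ((v - ρ * s) / Real.sqrt (1 - ρ ^ 2)) :=
    fun s => mul_pos (phi_pos _) (Phi_pos _)
  rw [Phi2_eq h, setIntegral_pos_iff_support_of_nonneg_ae
    (Filter.Eventually.of_forall fun t => (hp t).le) (integrable_phi_mul_Phi ρ v).integrableOn]
  rw [Set.eq_univ_of_forall (s := Function.support _) fun t => (hp t).ne']
  simp

lemma phi2_pos {ρ : ℝ} (h : 0 < 1 - ρ ^ 2) (s t : ℝ) : 0 < phi2 s t ρ := by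
  have := Real.sqrt_pos.mpr h
  unfold phi2; positivity

lemma phi2_le {ρ : ℝ} (h : 0 < 1 - ρ ^ 2) (s v : ℝ) :
    phi2 s v ρ ≤ phi s * (Real.sqrt (1 - ρ ^ 2))⁻¹ := by
  rw [phi2_eq h]
  refine mul_le_mul_of_nonneg_left ?_ (phi_pos _).le
  exact mul_le_of_le_one_right (by positivity) (phi_le_one _)

/-! ### Plackett's identity for the correlation derivative -/

lemma hasDerivAt_phi2_left {ρ : ℝ} (h : 0 < 1 - ρ ^ 2) (s v : ℝ) :
    HasDerivAt (fun s => phi2 s v ρ) (phi2 s v ρ * ((ρ * v - s) / (1 - ρ ^ 2))) s := by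
  have hs : HasDerivAt (fun s : ℝ => s) 1 s := hasDerivAt_id s
  have h1 : HasDerivAt (fun s : ℝ => -(s ^ 2 - 2 * ρ * s * v + v ^ 2) / (2 * (1 - ρ ^ 2)))
      ((ρ * v - s) / (1 - ρ ^ 2)) s := by
    have := ((((hs.pow 2).sub ((hs.const_mul (2 * ρ)).mul_const v)).add_const (v ^ 2)).neg).div_const
      (2 * (1 - ρ ^ 2))
    refine this.congr_deriv ?_
    have := h.ne'
    simp
    field_simp
  unfold phi2
  refine (h1.exp.const_mul (2 * Real.pi * Real.sqrt (1 - ρ ^ 2))⁻¹).congr_deriv ?_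
  ring

/-- The parameter derivative of the integrand in `Phi2_eq`; it agrees with the `s`-derivative of
the bivariate density in `hasDerivAt_phi2_left`. -/
lemma hasDerivAt_integrand {ρ : ℝ} (h : 0 < 1 - ρ ^ 2) (s v : ℝ) :
    HasDerivAt (fun ρ => phi s * Phi ((v - ρ * s) / Real.sqrt (1 - ρ ^ 2)))
      (phi2 s v ρ * ((ρ * v - s) / (1 - ρ ^ 2))) ρ := by
  have hσ : 0 < Real.sqrt (1 - ρ ^ 2) := Real.sqrt_pos.mpr h
  have hσ2 : Real.sqrt (1 - ρ ^ 2) ^ 2 = 1 - ρ ^ 2 := Real.sq_sqrt h.le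
  have hs : HasDerivAt (fun x : ℝ => x) 1 ρ := hasDerivAt_id ρ
  have h1 := ((hs.pow 2).const_sub 1).sqrt h.ne'
  have h2 := ((hs.mul_const s).const_sub v).div h1 hσ.ne'
  have h3 := ((hasDerivAt_Phi _).comp ρ h2).const_mul (phi s)
  refine h3.congr_deriv ?_
  rw [phi2_eq h]
  simp only [Pi.div_apply, Pi.pow_apply]
  set σ := Real.sqrt (1 - ρ ^ 2)
  rw [← hσ2]
  field_simp
  simp
  rw [hσ2]
  ring_nf

/-- **Plackett's identity**: the bivariate normal distribution function has the bivariate density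
as its derivative in the correlation. -/
lemma hasDerivAt_Phi2 {r : ℝ} (h : 0 < 1 - r ^ 2) (u v : ℝ) :
    HasDerivAt (fun ρ => Phi2 u v ρ) (phi2 u v r) r := by
  -- On the neighbourhood where `1 - ρ²` exceeds half its value at `r`, the bound is uniform.
  set c := (1 - r ^ 2) / 2 with hc
  have hc0 : 0 < c := by positivity
  have hN : {ρ : ℝ | c < 1 - ρ ^ 2} ∈ nhds r := by
    refine IsOpen.mem_nhds (isOpen_lt (by fun_prop) (by fun_prop)) ?_
    change c < 1 - r ^ 2
    linarith
  have hphi := continuous_phi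
  have hPhi := continuous_Phi
  have hcphi2 : Continuous fun s => phi2 s v r := by unfold phi2; fun_prop
  obtain ⟨hint, hder⟩ := hasDerivAt_integral_of_dominated_loc_of_deriv_le
    (μ := volume.restrict (Set.Iic u))
    (F := fun ρ s => phi s * Phi ((v - ρ * s) / Real.sqrt (1 - ρ ^ 2)))
    (F' := fun ρ s => phi2 s v ρ * ((ρ * v - s) / (1 - ρ ^ 2)))
    (bound := fun s => (phi s * |v| + phi s * |s|) * ((Real.sqrt c)⁻¹ * c⁻¹)) hN
    (Filter.Eventually.of_forall fun ρ => (integrable_phi_mul_Phi ρ v).1.restrict)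
    (integrable_phi_mul_Phi r v).integrableOn
    (Continuous.aestronglyMeasurable (by fun_prop))
    (Filter.Eventually.of_forall fun s ρ hρ => by
      replace hρ : c < 1 - ρ ^ 2 := hρ
      have h' : 0 < 1 - ρ ^ 2 := hc0.trans hρ
      have hρ1 : |ρ| ≤ 1 := by
        rw [← sq_le_one_iff_abs_le_one]; linarith
      have e1 : (Real.sqrt (1 - ρ ^ 2))⁻¹ ≤ (Real.sqrt c)⁻¹ :=
        inv_anti₀ (Real.sqrt_pos.mpr hc0) (Real.sqrt_le_sqrt hρ.le)
      have e2 : (1 - ρ ^ 2)⁻¹ ≤ c⁻¹ := inv_anti₀ hc0 hρ.le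
      have e3 : |ρ * v - s| ≤ |v| + |s| := by
        refine (abs_sub _ _).trans ?_
        rw [abs_mul]
        gcongr
        exact mul_le_of_le_one_left (abs_nonneg _) hρ1
      have e4 : phi2 s v ρ ≤ phi s * (Real.sqrt c)⁻¹ :=
        (phi2_le h' s v).trans (mul_le_mul_of_nonneg_left e1 (phi_pos _).le)
      rw [Real.norm_eq_abs, abs_mul, abs_of_pos (phi2_pos h' s v), div_eq_mul_inv, abs_mul,
        abs_of_pos (inv_pos.mpr h')]
      have hp := (phi_pos s).le
      calc phi2 s v ρ * (|ρ * v - s| * (1 - ρ ^ 2)⁻¹)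
          ≤ (phi s * (Real.sqrt c)⁻¹) * ((|v| + |s|) * c⁻¹) := by gcongr
        _ = _ := by ring)
    (((integrable_phi.mul_const _).add integrable_phi_mul_abs).mul_const _).integrableOn
    (Filter.Eventually.of_forall fun s ρ hρ => hasDerivAt_integrand (hc0.trans hρ) s v)
  have hlim : Filter.Tendsto (fun s => phi2 s v r) Filter.atBot (nhds 0) := by
    have ht : Filter.Tendsto (fun s => phi s * (Real.sqrt (1 - r ^ 2))⁻¹) Filter.atBot (nhds 0) := by
      rw [← zero_mul (Real.sqrt (1 - r ^ 2))⁻¹]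
      refine Filter.Tendsto.mul_const _ ?_
      unfold phi
      rw [← mul_zero (Real.sqrt (2 * Real.pi))⁻¹]
      refine Filter.Tendsto.const_mul _ (Real.tendsto_exp_atBot.comp ?_)
      have : Filter.Tendsto (fun s : ℝ => s ^ 2) Filter.atBot Filter.atTop := by
        simpa only [sq, id] using Filter.tendsto_id.atBot_mul_atBot₀ Filter.tendsto_id
      exact (Filter.tendsto_neg_atTop_atBot.comp this).atBot_div_const (by norm_num)
    exact squeeze_zero (fun s => (phi2_pos h s v).le) (fun s => phi2_le h s v) ht
  rw [integral_Iic_of_hasDerivAt_of_tendsto hcphi2.continuousWithinAt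
    (fun s _ => hasDerivAt_phi2_left h s v) hint hlim, sub_zero] at hder
  refine hder.congr_of_eventuallyEq ?_
  filter_upwards [hN] with ρ hρ
  exact Phi2_eq (hc0.trans hρ) u v

/-! ### Smoothness and reflection symmetries of the bivariate density -/

lemma differentiableAt_phi2 {r : ℝ} (h : 0 < 1 - r ^ 2) (u v : ℝ) :
    DifferentiableAt ℝ (fun ρ => phi2 u v ρ) r := by
  have hσ : Real.sqrt (1 - r ^ 2) ≠ 0 := (Real.sqrt_pos.mpr h).ne'
  have h0 : 1 - r ^ 2 ≠ 0 := h.ne'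
  have h1 : DifferentiableAt ℝ (fun ρ : ℝ => Real.sqrt (1 - ρ ^ 2)) r :=
    DifferentiableAt.sqrt (by fun_prop) h0
  unfold phi2
  refine DifferentiableAt.mul (DifferentiableAt.inv (by fun_prop) (by positivity)) ?_
  refine DifferentiableAt.exp (DifferentiableAt.div (by fun_prop) (by fun_prop) ?_)
  positivity

lemma phi2_neg_neg_left (u v ρ : ℝ) : phi2 (-u) (-v) ρ = phi2 u v ρ := by
  unfold phi2; ring_nf

lemma phi2_neg_mid (u v ρ : ℝ) : phi2 u (-v) (-ρ) = phi2 u v ρ := by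
  unfold phi2; ring_nf

lemma phi2_neg_left (u v ρ : ℝ) : phi2 (-u) v (-ρ) = phi2 u v ρ := by
  unfold phi2; ring_nf

/-! ### Second derivatives of the log-likelihoods -/

/-- Calculus of a log-likelihood `log p` when `p > 0` has derivative `ε f` near `r`: at `r` it is
twice differentiable and `p (log p)'' = ε f' - (ε f)² / p`. -/
lemma log_second_deriv {p f L : ℝ → ℝ} {ε r : ℝ} (hL : ∀ s, L s = Real.log (p s))
    (hp : ∀ᶠ s in nhds r, 0 < p s ∧ HasDerivAt p (ε * f s) s) (hf : DifferentiableAt ℝ f r) :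
    DifferentiableAt ℝ L r ∧ DifferentiableAt ℝ (deriv L) r ∧
      p r * deriv (deriv L) r = ε * deriv f r - (ε * f r) ^ 2 / p r := by
  obtain rfl : L = fun s => Real.log (p s) := funext hL
  have hpr := hp.self_of_nhds
  have h1 : deriv (fun s => Real.log (p s)) =ᶠ[nhds r] fun s => ε * f s / p s := by
    filter_upwards [hp] with s hs
    exact (hs.2.log hs.1.ne').deriv
  have h2 := ((hf.hasDerivAt.const_mul ε).div hpr.2 hpr.1.ne').congr_of_eventuallyEq h1
  refine ⟨(hpr.2.log hpr.1.ne').differentiableAt, h2.differentiableAt, ?_⟩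
  rw [h2.deriv]
  have := hpr.1.ne'
  field_simp

/-- Information-matrix identity for the local dependence parameter: each quadrant
log-likelihood is twice differentiable at the true r, and the expected Hessian at the
truth equals -(1/p₁₁ + 1/p₁₀ + 1/p₀₁ + 1/p₀₀)·φ₂(u,v;r)². -/
theorem bdr_information_identity (u v r : ℝ) (hr : r ∈ Set.Ioo (-1 : ℝ) 1) :
    (∀ i ∈ ({0, 1} : Set ℝ), ∀ j ∈ ({0, 1} : Set ℝ),
        DifferentiableAt ℝ (quadLL u v i j) r ∧
          DifferentiableAt ℝ (deriv (quadLL u v i j)) r) ∧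
    Phi2 u v r * deriv (deriv (quadLL u v 1 1)) r
        + Phi2 u (-v) (-r) * deriv (deriv (quadLL u v 1 0)) r
        + Phi2 (-u) v (-r) * deriv (deriv (quadLL u v 0 1)) r
        + Phi2 (-u) (-v) r * deriv (deriv (quadLL u v 0 0)) r
      = -(1 / Phi2 u v r + 1 / Phi2 u (-v) (-r) + 1 / Phi2 (-u) v (-r)
            + 1 / Phi2 (-u) (-v) r) * phi2 u v r ^ 2 := by
  have h0 : ∀ s ∈ Set.Ioo (-1 : ℝ) 1, 0 < 1 - s ^ 2 := fun s hs => by nlinarith [hs.1, hs.2]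
  have hN : ∀ᶠ s in nhds r, s ∈ Set.Ioo (-1 : ℝ) 1 := isOpen_Ioo.mem_nhds hr
  have hf := differentiableAt_phi2 (h0 r hr) u v
  -- Each quadrant probability is positive near `r`, with derivative `ε φ₂(u,v;s)`, `ε = ±1`.
  have same : ∀ a b : ℝ, (∀ s, phi2 a b s = phi2 u v s) → ∀ᶠ s in nhds r,
      0 < Phi2 a b s ∧ HasDerivAt (fun s => Phi2 a b s) (1 * phi2 u v s) s := fun a b hab => by
    filter_upwards [hN] with s hs
    refine ⟨Phi2_pos (h0 s hs) a b, ?_⟩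
    rw [one_mul, ← hab]
    exact hasDerivAt_Phi2 (h0 s hs) a b
  have opp : ∀ a b : ℝ, (∀ s, phi2 a b (-s) = phi2 u v s) → ∀ᶠ s in nhds r,
      0 < Phi2 a b (-s) ∧ HasDerivAt (fun s => Phi2 a b (-s)) (-1 * phi2 u v s) s :=
      fun a b hab => by
    filter_upwards [hN] with s hs
    have h' : 0 < 1 - (-s) ^ 2 := by rw [neg_sq]; exact h0 s hs
    refine ⟨Phi2_pos h' a b, ?_⟩
    rw [← hab]
    exact ((hasDerivAt_Phi2 h' a b).comp s (hasDerivAt_neg s)).congr_deriv (by ring)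
  obtain ⟨a1, a2, a3⟩ := log_second_deriv (L := quadLL u v 1 1) (fun s => by simp [quadLL])
    (same u v fun _ => rfl) hf
  obtain ⟨b1, b2, b3⟩ := log_second_deriv (L := quadLL u v 1 0) (fun s => by simp [quadLL])
    (opp u (-v) (phi2_neg_mid u v)) hf
  obtain ⟨c1, c2, c3⟩ := log_second_deriv (L := quadLL u v 0 1) (fun s => by simp [quadLL])
    (opp (-u) v (phi2_neg_left u v)) hf
  obtain ⟨d1, d2, d3⟩ := log_second_deriv (L := quadLL u v 0 0) (fun s => by simp [quadLL])
    (same (-u) (-v) (phi2_neg_neg_left u v)) hf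
  constructor
  · rintro i (rfl | rfl) j (rfl | rfl)
    exacts [⟨d1, d2⟩, ⟨c1, c2⟩, ⟨b1, b2⟩, ⟨a1, a2⟩]
  · rw [a3, b3, c3, d3]
    ring
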